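/- Let p ≥ 2 and d ≥ 1. There exists a constant C_{p,d}, depending only on p and d, such that for every n ∈ ℕ^d and every negatively associated field {Y_k : k ≤ n} of random variables with E[Y_k] = 0 and E[|Y_k|^p] < ∞, one has E[ max_{m ≤ n} | Σ_{k ≤ m} Y_k |^p ] ≤ C_{p,d} { ( Σ_{k ≤ n} E[Y_k²] )^{p/2} + Σ_{k ≤ n} E[|Y_k|^p] }. -/

import Mathlib

/-! The proof is a chaining argument with adaptive truncation. Let `σ² > ∑ E Y_k²`; at the end `σ²`
decreases to `∑ E Y_k²`.

*Input from negative association.* If `f` is a non-decreasing truncation at level `a` of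
the identity or of its positive part, negative association factorises the Laplace transform and gives
`E exp (∑ f(Y_k) / a) ≤ exp (5 ∑ E Y_k² / a²)` (`CentredNA.exp_moment`). No maximal inequality
for the partial sums is available directly, so this bound is only applied to sums over
deterministic sets of indices, and the maximum is paid for by a union bound.

*Bracketing of rectangles.* The numbers `E Y_k²` define a measure of total mass less than `σ²` on
the index set. Cutting every coordinate axis at the quantiles of its marginal with mesh `16^{-v}`
yields, at scale `v`, of the order of `16^{v d}` rectangles, such that every `[1, m]` is one of them
up to a set of variance at most of the order of `16^{-v} σ²` (`exists_bracketing`).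

*Chaining.* At scale `v` the variables are truncated at `σ / 4^v`, which matches the standard
deviation of the increments at that scale. Both the increments of the chain and the parts of the
variables between two consecutive truncation levels are dominated by sums of monotone functions of
`Y_k` or `-Y_k` over the sets of the bracketing (`Bracketing.chain`, `Bracketing.chain_pow`).
The exponential bound makes their `r`-th moments of order `(σ / 4^v)^r`, and for `r > 4 d` this
beats the number of terms, so that the series over the scales converges (`Bracketing.max_moment`).

*Large values.* What exceeds the top level `σ` is nonnegative after splitting by sign, so its
partial sums are maximal at `n`; `CentredNA.excess_moment` is a Rosenthal inequality for these
sums and contributes the term `∑ E |Y_k|^p`.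
-/

open MeasureTheory Filter Finset

noncomputable section

/-- `plog x = ln (max x e)`, the truncated logarithm used in the paper. -/
def plog (x : ℝ) : ℝ := Real.log (max x (Real.exp 1))

/-- A family of real random variables `X i`, `i ∈ S`, is *negatively associated* if for every
pair of disjoint finite subsets `A`, `B` of `S` and all coordinatewise non-decreasing functions
`f`, `g`, one has `Cov (f (X_i, i ∈ A), g (X_j, j ∈ B)) ≤ 0`, whenever the covariance exists. -/
def NegAssocOn {Ω : Type} [MeasurableSpace Ω] (μ : Measure Ω) {ι : Type}
    (X : ι → Ω → ℝ) (S : Set ι) : Prop :=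
  ∀ A B : Finset ι, ↑A ⊆ S → ↑B ⊆ S → Disjoint A B →
    ∀ (f : (↥A → ℝ) → ℝ) (g : (↥B → ℝ) → ℝ), Monotone f → Monotone g →
      Integrable (fun ω => f (fun i => X i ω)) μ →
      Integrable (fun ω => g (fun j => X j ω)) μ →
      Integrable (fun ω => f (fun i => X i ω) * g (fun j => X j ω)) μ →
      ∫ ω, f (fun i => X i ω) * g (fun j => X j ω) ∂μ ≤
        (∫ ω, f (fun i => X i ω) ∂μ) * ∫ ω, g (fun j => X j ω) ∂μ
/-! ### Centred negatively associated families -/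

/-- A negatively associated family of centred, square integrable random variables indexed by a
finite set `S`. -/
structure CentredNA {Ω : Type} [MeasurableSpace Ω] (μ : Measure Ω) {ι : Type}
    (X : ι → Ω → ℝ) (S : Finset ι) : Prop where
  meas : ∀ k ∈ S, Measurable (X k)
  na : NegAssocOn μ X ↑S
  mean : ∀ k ∈ S, ∫ ω, X k ω ∂μ = 0
  sq : ∀ k ∈ S, Integrable (fun ω => X k ω ^ 2) μ

/-- Negative association is preserved by changing the sign of all variables: the two sign changes
in the covariance cancel. -/
theorem NegAssocOn.neg {Ω : Type} [MeasurableSpace Ω] {μ : Measure Ω} {ι : Type}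
    {X : ι → Ω → ℝ} {S : Set ι} (h : NegAssocOn μ X S) :
    NegAssocOn μ (fun i ω => - X i ω) S := by
  intro A B hA hB hAB f g hf hg if' ig ifg
  have key := h A B hA hB hAB (fun x => - f (fun i => - x i)) (fun x => - g (fun i => - x i))
    (fun x y hxy => neg_le_neg (hf fun i => neg_le_neg (hxy i)))
    (fun x y hxy => neg_le_neg (hg fun i => neg_le_neg (hxy i)))
    if'.neg ig.neg (by simpa using ifg)
  simpa [integral_neg] using key

theorem CentredNA.neg {Ω : Type} [MeasurableSpace Ω] {μ : Measure Ω} {ι : Type}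
    {X : ι → Ω → ℝ} {S : Finset ι} (h : CentredNA μ X S) :
    CentredNA μ (fun i ω => - X i ω) S where
  meas k hk := (h.meas k hk).neg
  na := h.na.neg
  mean k hk := by simp [integral_neg, h.mean k hk]
  sq k hk := by simpa using h.sq k hk

theorem CentredNA.integrable {Ω : Type} [MeasurableSpace Ω] {μ : Measure Ω}
    [IsProbabilityMeasure μ] {ι : Type}
    {X : ι → Ω → ℝ} {S : Finset ι} (h : CentredNA μ X S) {k : ι} (hk : k ∈ S) :
    Integrable (X k) μ := by
  refine ((integrable_const (1 : ℝ)).add (h.sq k hk)).mono' (h.meas k hk).aestronglyMeasurable ?_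
  refine Eventually.of_forall fun ω => ?_
  simp only [Real.norm_eq_abs, Pi.add_apply]
  nlinarith [sq_abs (X k ω), sq_nonneg (|X k ω| - 1), abs_nonneg (X k ω)]

/-! ### Exponential moments of sums of truncated variables -/

/-- One-variable estimate behind the exponential bound. The condition `f x ≤ b x + 4 x² / a` lets
`E f(Z)` be controlled by the second moment of a centred variable `Z`; no centring of `f(Z)` is
needed. -/
theorem exp_moment_single {Ω : Type} [MeasurableSpace Ω] {μ : Measure Ω}
    [IsProbabilityMeasure μ] {Z : Ω → ℝ} (hZ : Integrable Z μ)
    (hmean : ∫ ω, Z ω ∂μ = 0) (hsq : Integrable (fun ω => Z ω ^ 2) μ)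
    {f : ℝ → ℝ} {a b : ℝ} (ha : 0 < a) (h1 : ∀ x, |f x| ≤ a)
    (h2 : ∀ x, |f x| ≤ |x|) (h3 : ∀ x, f x ≤ b * x + 4 * x ^ 2 / a) :
    ∫ ω, Real.exp (f (Z ω) / a) ∂μ ≤ Real.exp (5 * (∫ ω, Z ω ^ 2 ∂μ) / a ^ 2) := by
  have hpt : ∀ x, Real.exp (f x / a) ≤ 1 + (b / a) * x + (5 / a ^ 2) * x ^ 2 := by
    intro x
    have e1 : |f x / a| ≤ 1 := by
      rw [abs_div, abs_of_pos ha, div_le_one ha]; exact h1 x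
    have e2 := (abs_le.1 (Real.abs_exp_sub_one_sub_id_le e1)).2
    have e3 : f x / a ≤ (b / a) * x + (4 / a ^ 2) * x ^ 2 := by
      rw [div_le_iff₀ ha]
      refine (h3 x).trans (le_of_eq ?_)
      field_simp
    have e4 : (f x / a) ^ 2 ≤ (1 / a ^ 2) * x ^ 2 := by
      rw [div_pow, div_eq_mul_one_div, mul_comm]
      exact mul_le_mul_of_nonneg_left (sq_le_sq.2 (h2 x)) (by positivity)
    have e5 : (5 / a ^ 2) * x ^ 2 = (4 / a ^ 2) * x ^ 2 + (1 / a ^ 2) * x ^ 2 := by ring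
    linarith
  have hInt : Integrable (fun ω => 1 + (b / a) * Z ω + (5 / a ^ 2) * Z ω ^ 2) μ :=
    ((integrable_const 1).add (hZ.const_mul _)).add (hsq.const_mul _)
  calc ∫ ω, Real.exp (f (Z ω) / a) ∂μ
      ≤ ∫ ω, (1 + (b / a) * Z ω + (5 / a ^ 2) * Z ω ^ 2) ∂μ :=
        integral_mono_of_nonneg (Eventually.of_forall fun ω => (Real.exp_pos _).le) hInt
          (Eventually.of_forall fun ω => hpt _)
    _ = 1 + 5 * (∫ ω, Z ω ^ 2 ∂μ) / a ^ 2 := by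
        have hlin : Integrable (fun ω => 1 + (b / a) * Z ω) μ :=
          (integrable_const 1).add (hZ.const_mul _)
        rw [integral_add hlin (hsq.const_mul _),
          integral_add (integrable_const 1) (hZ.const_mul _), integral_const_mul,
          integral_const_mul, hmean]
        simp
        ring
    _ ≤ _ := by linarith [Real.add_one_le_exp (5 * (∫ ω, Z ω ^ 2 ∂μ) / a ^ 2)]

theorem integrable_exp_sum {Ω : Type} [MeasurableSpace Ω] {μ : Measure Ω}
    [IsProbabilityMeasure μ] {ι : Type} {X : ι → Ω → ℝ} {D : Finset ι}
    (hX : ∀ k ∈ D, Measurable (X k)) {f : ℝ → ℝ} (hf : Monotone f) {a : ℝ} (ha : 0 < a)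
    (h1 : ∀ x, |f x| ≤ a) :
    Integrable (fun ω => Real.exp (∑ k ∈ D, f (X k ω) / a)) μ := by
  refine Integrable.of_bound (C := Real.exp (∑ k ∈ D, 1)) ?_ (Eventually.of_forall fun ω => ?_)
  · refine (Real.measurable_exp.comp ?_).aestronglyMeasurable
    exact Finset.measurable_fun_sum D fun k hk => (hf.measurable.comp (hX k hk)).div_const a
  · rw [Real.norm_eq_abs, Real.abs_exp, Real.exp_le_exp]
    refine Finset.sum_le_sum fun k _ => ?_
    rw [div_le_one ha]
    exact (abs_le.1 (h1 _)).2

/-- Negative association bounds the Laplace transform of a sum of monotone images by the product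
of the individual Laplace transforms, each of which is estimated by `exp_moment_single`. -/
theorem CentredNA.exp_moment {Ω : Type} [MeasurableSpace Ω] {μ : Measure Ω}
    [IsProbabilityMeasure μ] {ι : Type} {X : ι → Ω → ℝ} {S : Finset ι} (h : CentredNA μ X S)
    {f : ℝ → ℝ} (hf : Monotone f) {a b : ℝ} (ha : 0 < a) (h1 : ∀ x, |f x| ≤ a)
    (h2 : ∀ x, |f x| ≤ |x|) (h3 : ∀ x, f x ≤ b * x + 4 * x ^ 2 / a)
    (D : Finset ι) (hD : D ⊆ S) :
    ∫ ω, Real.exp (∑ k ∈ D, f (X k ω) / a) ∂μ ≤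
      Real.exp (5 * (∑ k ∈ D, ∫ ω, X k ω ^ 2 ∂μ) / a ^ 2) := by
  classical
  induction D using Finset.induction_on with
  | empty => simp
  | insert k D hk ih =>
    have hkS : k ∈ S := hD (Finset.mem_insert_self k D)
    have hDS : D ⊆ S := (Finset.subset_insert k D).trans hD
    have hsingle : ∀ ω, Real.exp (∑ j ∈ ({k} : Finset ι), f (X j ω) / a) =
        Real.exp (f (X k ω) / a) := fun ω => by simp
    have i1 : Integrable (fun ω => Real.exp (f (X k ω) / a)) μ := by
      have := integrable_exp_sum (μ := μ) (D := {k}) (X := X)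
        (by intro j hj; rw [Finset.mem_singleton.1 hj]; exact h.meas k hkS) hf ha h1
      simpa only [hsingle] using this
    have i2 := integrable_exp_sum (μ := μ) (fun j hj => h.meas j (hDS hj)) hf ha h1
    have i3 := integrable_exp_sum (μ := μ) (fun j hj => h.meas j (hD hj)) hf ha h1
    have hmul : ∀ ω, Real.exp (∑ j ∈ insert k D, f (X j ω) / a) =
        Real.exp (f (X k ω) / a) * Real.exp (∑ j ∈ D, f (X j ω) / a) := fun ω => by
      rw [Finset.sum_insert hk, Real.exp_add]
    have hconv : ∀ ω, ∑ j : ↥D, f (X j ω) / a = ∑ j ∈ D, f (X j ω) / a := fun ω =>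
      Finset.sum_coe_sort D (fun j => f (X j ω) / a)
    simp only [hmul] at i3 ⊢
    have key := h.na {k} D (by simpa using hkS) (by exact_mod_cast hDS) (by simpa using hk)
      (fun x => Real.exp (f (x ⟨k, Finset.mem_singleton_self k⟩) / a))
      (fun x => Real.exp (∑ j : ↥D, f (x j) / a))
      (fun x y hxy => Real.exp_le_exp.2 (div_le_div_of_nonneg_right (hf (hxy _)) ha.le))
      (fun x y hxy => Real.exp_le_exp.2 (Finset.sum_le_sum fun j _ =>
        div_le_div_of_nonneg_right (hf (hxy j)) ha.le))
      i1 (by simpa only [hconv] using i2) (by simpa only [hconv] using i3)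
    simp only [hconv] at key
    refine key.trans ?_
    rw [Finset.sum_insert hk, mul_add, add_div, Real.exp_add]
    exact mul_le_mul
      (exp_moment_single (h.integrable hkS) (h.mean k hkS) (h.sq k hkS) ha h1 h2 h3)
      (ih hDS) (integral_nonneg fun ω => (Real.exp_pos _).le) (Real.exp_pos _).le

/-- Truncation of `x` to the interval `[-a, a]`. -/
def clip (a x : ℝ) : ℝ := max (-a) (min x a)

/-- The positive part of `clip a x - clip (a / 4) x`, the difference of two consecutive
truncations. -/
def bump (a x : ℝ) : ℝ := max 0 (min x a - a / 4)

/-- The overshoot of `x` above the level `a`. -/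
def excess (a x : ℝ) : ℝ := max 0 (x - a)

theorem clip_mono (a : ℝ) : Monotone (clip a) := fun _ _ h =>
  max_le_max le_rfl (min_le_min h le_rfl)

theorem bump_mono (a : ℝ) : Monotone (bump a) := fun _ _ h =>
  max_le_max le_rfl (sub_le_sub_right (min_le_min h le_rfl) _)

theorem excess_mono (a : ℝ) : Monotone (excess a) := fun _ _ h =>
  max_le_max le_rfl (sub_le_sub_right h _)

theorem bump_nonneg (a x : ℝ) : 0 ≤ bump a x := le_max_left _ _

theorem excess_nonneg (a x : ℝ) : 0 ≤ excess a x := le_max_left _ _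

theorem clip_neg {a : ℝ} (ha : 0 < a) (x : ℝ) : clip a (-x) = - clip a x := by
  unfold clip
  rcases max_cases (-a) (min x a) with h | h <;> rcases min_cases x a with h' | h' <;>
  rcases max_cases (-a) (min (-x) a) with h'' | h'' <;>
  rcases min_cases (-x) a with h3 | h3 <;> linarith

theorem abs_clip_le {a : ℝ} (ha : 0 < a) (x : ℝ) : |clip a x| ≤ a := by
  unfold clip
  rw [abs_le]
  exact ⟨le_max_left _ _, max_le (by linarith) (min_le_right _ _)⟩

theorem abs_clip_le_abs {a : ℝ} (ha : 0 < a) (x : ℝ) : |clip a x| ≤ |x| := by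
  unfold clip
  rcases max_cases (-a) (min x a) with h | h <;> rcases min_cases x a with h' | h' <;>
  rw [h.1] <;> (try rw [h'.1]) <;> cases abs_cases x <;> simp only [abs_le] <;>
    constructor <;> linarith

/-- Truncation error of a large value is at most quadratic. -/
theorem clip_le {a : ℝ} (ha : 0 < a) (x : ℝ) : clip a x ≤ 1 * x + 4 * x ^ 2 / a := by
  unfold clip
  have h0 : 0 ≤ 4 * x ^ 2 / a := by positivity
  refine max_le ?_ ((min_le_left _ _).trans (by linarith))
  rw [← sub_nonneg]
  have : 1 * x + 4 * x ^ 2 / a - -a = (4 * x ^ 2 + x * a + a ^ 2) / a := by field_simp; ring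
  rw [this]
  exact div_nonneg (by nlinarith [sq_nonneg (x + a), sq_nonneg x, sq_nonneg a]) ha.le

theorem abs_bump_le {a : ℝ} (ha : 0 < a) (x : ℝ) : |bump a x| ≤ a := by
  rw [abs_of_nonneg (bump_nonneg a x)]
  exact max_le ha.le (by linarith [min_le_right x a])

theorem abs_bump_le_abs {a : ℝ} (ha : 0 < a) (x : ℝ) : |bump a x| ≤ |x| := by
  rw [abs_of_nonneg (bump_nonneg a x)]
  exact max_le (abs_nonneg x) (by linarith [min_le_left x a, le_abs_self x])

theorem bump_le {a : ℝ} (ha : 0 < a) (x : ℝ) : bump a x ≤ 0 * x + 4 * x ^ 2 / a := by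
  have h0 : 0 ≤ 4 * x ^ 2 / a := by positivity
  refine max_le (by linarith) ?_
  have h1 : min x a - a / 4 ≤ x - a / 4 := by linarith [min_le_left x a]
  refine h1.trans ?_
  rw [← sub_nonneg]
  have : 0 * x + 4 * x ^ 2 / a - (x - a / 4) = (4 * x ^ 2 - x * a + a ^ 2 / 4) / a := by
    field_simp; ring
  rw [this]
  exact div_nonneg (by nlinarith [sq_nonneg (x - a / 2), sq_nonneg x, sq_nonneg a]) ha.le

theorem abs_clip_sub_clip {a : ℝ} (ha : 0 < a) (x : ℝ) :
    |clip a x - clip (a / 4) x| ≤ bump a x + bump a (-x) := by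
  have main : ∀ y : ℝ, 0 ≤ y → |clip a y - clip (a / 4) y| ≤ bump a y := by
    intro y hy
    have ha4 : 0 < a / 4 := by linarith
    have e1 : clip a y = min y a := max_eq_right (by have := le_min hy ha.le; linarith)
    have e2 : clip (a / 4) y = min y (a / 4) :=
      max_eq_right (by have := le_min hy ha4.le; linarith)
    rw [e1, e2, abs_of_nonneg (sub_nonneg.2 (min_le_min le_rfl (by linarith)))]
    unfold bump
    rcases min_cases y (a / 4) with h | h
    · rw [h.1]
      exact le_max_of_le_left (by linarith [min_le_left y a])
    · rw [h.1]
      exact le_max_right _ _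
  rcases le_total 0 x with hx | hx
  · linarith [main x hx, bump_nonneg a (-x)]
  · have h := main (-x) (by linarith)
    rw [clip_neg ha, clip_neg (by linarith : 0 < a / 4), ← neg_sub', abs_neg] at h
    linarith [bump_nonneg a x]

theorem abs_sub_clip {a : ℝ} (ha : 0 < a) (x : ℝ) :
    |x - clip a x| ≤ excess a x + excess a (-x) := by
  unfold clip excess
  rcases max_cases (-a) (min x a) with h | h <;> rcases min_cases x a with h' | h' <;>
  rcases max_cases 0 (x - a) with h4 | h4 <;>
  rcases max_cases 0 (-x - a) with h5 | h5 <;>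
  (rw [abs_le]; constructor <;> linarith)

theorem excess_le_abs {a : ℝ} (ha : 0 < a) (x : ℝ) : excess a x ≤ |x| :=
  max_le (abs_nonneg x) (by linarith [le_abs_self x])

theorem excess_le {a : ℝ} (ha : 0 < a) (x : ℝ) : excess a x ≤ x ^ 2 / a := by
  refine max_le (by positivity) ?_
  rw [le_div_iff₀ ha]
  nlinarith [sq_nonneg (x - a / 2), sq_nonneg a]

/-! ### Moments of sums of truncated variables -/

theorem pow_sum_le_exp {ι : Type} (D : Finset ι) (y : ι → ℝ) {a : ℝ} (ha : 0 < a) (r : ℕ)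
    (hy : 0 ≤ ∑ k ∈ D, y k) :
    (∑ k ∈ D, y k) ^ r ≤ (r.factorial : ℝ) * a ^ r * Real.exp (∑ k ∈ D, y k / a) := by
  have h1 := Real.pow_div_factorial_le_exp (∑ k ∈ D, y k / a)
    (by rw [← Finset.sum_div]; positivity) r
  rw [← Finset.sum_div] at h1 ⊢
  have hr : (0 : ℝ) < r.factorial := by positivity
  rw [div_le_iff₀ hr, div_pow, div_le_iff₀ (by positivity)] at h1
  linarith

theorem CentredNA.bump_moment {Ω : Type} [MeasurableSpace Ω] {μ : Measure Ω}
    [IsProbabilityMeasure μ] {ι : Type} {X : ι → Ω → ℝ} {S : Finset ι} (h : CentredNA μ X S)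
    {a K : ℝ} (ha : 0 < a) (D : Finset ι) (hD : D ⊆ S) (r : ℕ)
    (hK : ∑ k ∈ D, ∫ ω, X k ω ^ 2 ∂μ ≤ K * a ^ 2) :
    Integrable (fun ω => (∑ k ∈ D, bump a (X k ω)) ^ r) μ ∧
    ∫ ω, (∑ k ∈ D, bump a (X k ω)) ^ r ∂μ ≤
      (r.factorial : ℝ) * a ^ r * Real.exp (5 * K) := by
  have hpos : ∀ ω, 0 ≤ ∑ k ∈ D, bump a (X k ω) := fun ω =>
    Finset.sum_nonneg fun k _ => bump_nonneg _ _
  have hi := (integrable_exp_sum (μ := μ) (fun k hk => h.meas k (hD hk)) (bump_mono a) ha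
    (abs_bump_le ha)).const_mul ((r.factorial : ℝ) * a ^ r)
  have hle : ∀ ω, (∑ k ∈ D, bump a (X k ω)) ^ r ≤
      (r.factorial : ℝ) * a ^ r * Real.exp (∑ k ∈ D, bump a (X k ω) / a) := fun ω =>
    pow_sum_le_exp D _ ha r (hpos ω)
  have hInt : Integrable (fun ω => (∑ k ∈ D, bump a (X k ω)) ^ r) μ := by
    refine hi.mono' ?_ (Eventually.of_forall fun ω => ?_)
    · exact ((Finset.measurable_fun_sum D fun k hk =>
        (bump_mono a).measurable.comp (h.meas k (hD hk))).pow_const r).aestronglyMeasurable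
    · rw [Real.norm_of_nonneg (pow_nonneg (hpos ω) r)]
      exact hle ω
  refine ⟨hInt, (integral_mono hInt hi hle).trans ?_⟩
  rw [integral_const_mul]
  refine mul_le_mul_of_nonneg_left ?_ (by positivity)
  refine (h.exp_moment (bump_mono a) ha (abs_bump_le ha) (abs_bump_le_abs ha) (bump_le ha)
    D hD).trans (Real.exp_le_exp.2 ?_)
  rw [div_le_iff₀ (by positivity)]
  linarith

theorem CentredNA.clip_moment {Ω : Type} [MeasurableSpace Ω] {μ : Measure Ω}
    [IsProbabilityMeasure μ] {ι : Type} {X : ι → Ω → ℝ} {S : Finset ι} (h : CentredNA μ X S)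
    {a K : ℝ} (ha : 0 < a) (D : Finset ι) (hD : D ⊆ S) (r : ℕ)
    (hK : ∑ k ∈ D, ∫ ω, X k ω ^ 2 ∂μ ≤ K * a ^ 2) :
    Integrable (fun ω => |∑ k ∈ D, clip a (X k ω)| ^ r) μ ∧
    ∫ ω, |∑ k ∈ D, clip a (X k ω)| ^ r ∂μ ≤
      2 * ((r.factorial : ℝ) * a ^ r * Real.exp (5 * K)) := by
  have hi : ∀ Z : ι → Ω → ℝ, CentredNA μ Z S → Integrable (fun ω =>
      (r.factorial : ℝ) * a ^ r * Real.exp (∑ k ∈ D, clip a (Z k ω) / a)) μ := fun Z hZ =>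
    (integrable_exp_sum (μ := μ) (fun k hk => hZ.meas k (hD hk)) (clip_mono a) ha
      (abs_clip_le ha)).const_mul ((r.factorial : ℝ) * a ^ r)
  have hb : ∀ Z : ι → Ω → ℝ, CentredNA μ Z S → ∑ k ∈ D, ∫ ω, Z k ω ^ 2 ∂μ ≤ K * a ^ 2 →
      ∫ ω, (r.factorial : ℝ) * a ^ r * Real.exp (∑ k ∈ D, clip a (Z k ω) / a) ∂μ ≤
      (r.factorial : ℝ) * a ^ r * Real.exp (5 * K) := by
    intro Z hZ hZK
    rw [integral_const_mul]
    refine mul_le_mul_of_nonneg_left ?_ (by positivity)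
    refine (hZ.exp_moment (clip_mono a) ha (abs_clip_le ha) (abs_clip_le_abs ha) (clip_le ha)
      D hD).trans (Real.exp_le_exp.2 ?_)
    rw [div_le_iff₀ (by positivity)]
    linarith
  have hle : ∀ ω, |∑ k ∈ D, clip a (X k ω)| ^ r ≤
      (r.factorial : ℝ) * a ^ r * Real.exp (∑ k ∈ D, clip a (X k ω) / a) +
      (r.factorial : ℝ) * a ^ r * Real.exp (∑ k ∈ D, clip a (- X k ω) / a) := by
    intro ω
    have p1 : 0 ≤ (r.factorial : ℝ) * a ^ r * Real.exp (∑ k ∈ D, clip a (X k ω) / a) := by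
      positivity
    have p2 : 0 ≤ (r.factorial : ℝ) * a ^ r * Real.exp (∑ k ∈ D, clip a (- X k ω) / a) := by
      positivity
    rcases le_total 0 (∑ k ∈ D, clip a (X k ω)) with hs | hs
    · rw [abs_of_nonneg hs]
      linarith [pow_sum_le_exp D (fun k => clip a (X k ω)) ha r hs]
    · have hs' : ∑ k ∈ D, clip a (- X k ω) = - ∑ k ∈ D, clip a (X k ω) := by
        simp only [clip_neg ha, Finset.sum_neg_distrib]
      rw [abs_of_nonpos hs, ← hs']
      linarith [pow_sum_le_exp D (fun k => clip a (- X k ω)) ha r (by rw [hs']; linarith)]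
  have hs := (hi X h).add (hi _ h.neg)
  have hInt : Integrable (fun ω => |∑ k ∈ D, clip a (X k ω)| ^ r) μ := by
    refine hs.mono' ?_ (Eventually.of_forall fun ω => ?_)
    · refine (Measurable.pow_const (Measurable.abs ?_) r).aestronglyMeasurable
      exact Finset.measurable_fun_sum D fun k hk =>
        (clip_mono a).measurable.comp (h.meas k (hD hk))
    · rw [Real.norm_of_nonneg (pow_nonneg (abs_nonneg _) r)]
      exact hle ω
  refine ⟨hInt, (integral_mono hInt hs hle).trans ?_⟩
  have e := integral_add (hi X h) (hi _ h.neg)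
  have b1 := hb X h hK
  have b2 := hb _ h.neg (by simpa using hK)
  simp only [Pi.add_apply]
  rw [e]
  linarith

/-! ### Moments of the large values -/

theorem add_rpow_le_two {x y s : ℝ} (hx : 0 ≤ x) (hy : 0 ≤ y) (hs : 0 ≤ s) :
    (x + y) ^ s ≤ 2 ^ s * (x ^ s + y ^ s) := by
  have hxs := Real.rpow_nonneg hx s
  have hys := Real.rpow_nonneg hy s
  have h2 : (0 : ℝ) ≤ 2 ^ s := by positivity
  rcases le_total x y with h | h
  · calc (x + y) ^ s ≤ (2 * y) ^ s := Real.rpow_le_rpow (by linarith) (by linarith) hs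
      _ = 2 ^ s * y ^ s := Real.mul_rpow (by norm_num) hy
      _ ≤ _ := by nlinarith
  · calc (x + y) ^ s ≤ (2 * x) ^ s := Real.rpow_le_rpow (by linarith) (by linarith) hs
      _ = 2 ^ s * x ^ s := Real.mul_rpow (by norm_num) hx
      _ ≤ _ := by nlinarith

theorem mul_rpow_sub_one {x p : ℝ} (hx : 0 ≤ x) (hp : 1 < p) : x * x ^ (p - 1) = x ^ p := by
  rcases hx.eq_or_lt with rfl | hx
  · rw [Real.zero_rpow (by linarith : p ≠ 0)]; simp
  · rw [Real.rpow_sub_one hx.ne']; field_simp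

/-- A form of Young's inequality with a free parameter `K`. -/
theorem young_aux {a t p K : ℝ} (ha : 0 ≤ a) (ht : 0 ≤ t) (hp : 1 < p) (hK : 0 < K) :
    a * t ^ (p - 1) ≤ t ^ p / K + K ^ (p - 1) * a ^ p := by
  have hp1 : 0 ≤ p - 1 := by linarith
  rcases le_total (K * a) t with h | h
  · have : a * t ^ (p - 1) ≤ t ^ p / K := by
      rw [le_div_iff₀ hK, ← mul_rpow_sub_one ht hp]
      have := mul_le_mul_of_nonneg_right h (Real.rpow_nonneg ht (p - 1))
      linarith
    have : 0 ≤ K ^ (p - 1) * a ^ p := by positivity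
    linarith
  · have h1 : t ^ (p - 1) ≤ K ^ (p - 1) * a ^ (p - 1) := by
      rw [← Real.mul_rpow hK.le ha]
      exact Real.rpow_le_rpow ht h hp1
    have h2 := mul_le_mul_of_nonneg_left h1 ha
    have h3 : 0 ≤ t ^ p / K := by positivity
    rw [← mul_rpow_sub_one ha hp]
    linarith

/-- Rosenthal's inequality for the sum of the overshoots. Writing `T` for the sum and `U` for the
sum without the `k`-th overshoot `Z`, one has `E Z U^(p-1) ≤ E Z · E T^(p-1)` by negative
association, and the total mean of the overshoots is at most `a`. -/
theorem CentredNA.excess_moment {Ω : Type} [MeasurableSpace Ω] {μ : Measure Ω}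
    [IsProbabilityMeasure μ] {ι : Type} {X : ι → Ω → ℝ} {S : Finset ι} (h : CentredNA μ X S)
    {p : ℝ} (hp : 1 < p) (hpi : ∀ k ∈ S, Integrable (fun ω => |X k ω| ^ p) μ)
    {a : ℝ} (ha : 0 < a) (hS : ∑ k ∈ S, ∫ ω, X k ω ^ 2 ∂μ ≤ a ^ 2) :
    Integrable (fun ω => (∑ k ∈ S, excess a (X k ω)) ^ p) μ ∧
    ∫ ω, (∑ k ∈ S, excess a (X k ω)) ^ p ∂μ ≤
      2 ^ p * (∑ k ∈ S, ∫ ω, |X k ω| ^ p ∂μ + (2 ^ p) ^ (p - 1) * a ^ p) := by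
  classical
  have hp0 : 0 < p := by linarith
  have hp1 : 0 ≤ p - 1 := by linarith
  set Z : ι → Ω → ℝ := fun k ω => excess a (X k ω) with hZdef
  have hZ0 : ∀ k ω, 0 ≤ Z k ω := fun k ω => excess_nonneg _ _
  have hZm : ∀ k ∈ S, Measurable (Z k) := fun k hk =>
    (excess_mono a).measurable.comp (h.meas k hk)
  set T : Ω → ℝ := fun ω => ∑ k ∈ S, Z k ω with hTdef
  have hT0 : ∀ ω, 0 ≤ T ω := fun ω => Finset.sum_nonneg fun k _ => hZ0 k ω
  have hTm : Measurable T := Finset.measurable_fun_sum S hZm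
  have hZp : ∀ k ω, Z k ω ^ p ≤ |X k ω| ^ p := fun k ω =>
    Real.rpow_le_rpow (hZ0 k ω) (excess_le_abs ha _) hp0.le
  have hZpi : ∀ k ∈ S, Integrable (fun ω => Z k ω ^ p) μ := fun k hk =>
    (hpi k hk).mono' ((hZm k hk).pow_const p).aestronglyMeasurable
      (Eventually.of_forall fun ω => by
        rw [Real.norm_of_nonneg (Real.rpow_nonneg (hZ0 k ω) p)]; exact hZp k ω)
  -- The `p`-th power of the sum is integrable, as `L^p` is a vector space.
  have hTp : Integrable (fun ω => T ω ^ p) μ := by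
    have hmem : MemLp T (ENNReal.ofReal p) μ := by
      refine memLp_finsetSum S fun k hk => ?_
      rw [← integrable_norm_rpow_iff (hZm k hk).aestronglyMeasurable (by simpa using hp0)
        ENNReal.ofReal_ne_top, ENNReal.toReal_ofReal hp0.le]
      refine (hZpi k hk).congr (Eventually.of_forall fun ω => ?_)
      simp only [Real.norm_of_nonneg (hZ0 k ω)]
    rw [← integrable_norm_rpow_iff hTm.aestronglyMeasurable (by simpa using hp0)
        ENNReal.ofReal_ne_top, ENNReal.toReal_ofReal hp0.le] at hmem
    refine hmem.congr (Eventually.of_forall fun ω => ?_)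
    simp only [Real.norm_of_nonneg (hT0 ω)]
  have hTq : Integrable (fun ω => T ω ^ (p - 1)) μ := by
    refine ((integrable_const (1 : ℝ)).add hTp).mono' (hTm.pow_const _).aestronglyMeasurable
      (Eventually.of_forall fun ω => ?_)
    rw [Real.norm_of_nonneg (Real.rpow_nonneg (hT0 ω) _)]
    simp only [Pi.add_apply]
    rcases le_total (T ω) 1 with h1 | h1
    · linarith [Real.rpow_le_one (hT0 ω) h1 hp1, Real.rpow_nonneg (hT0 ω) p]
    · linarith [Real.rpow_le_rpow_of_exponent_le h1 (by linarith : p - 1 ≤ p)]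
  set Q := ∫ ω, T ω ^ (p - 1) ∂μ with hQ
  have hQ0 : 0 ≤ Q := integral_nonneg fun ω => Real.rpow_nonneg (hT0 ω) _
  have hZi : ∀ k ∈ S, Integrable (Z k) μ := fun k hk =>
    (h.integrable hk).abs.mono' (hZm k hk).aestronglyMeasurable
      (Eventually.of_forall fun ω => by
        rw [Real.norm_of_nonneg (hZ0 k ω)]; exact excess_le_abs ha _)
  have hZmean : ∑ k ∈ S, ∫ ω, Z k ω ∂μ ≤ a := by
    have h1 : ∀ k ∈ S, ∫ ω, Z k ω ∂μ ≤ (∫ ω, X k ω ^ 2 ∂μ) / a := by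
      intro k hk
      rw [← integral_div]
      exact integral_mono (hZi k hk) ((h.sq k hk).div_const a) fun ω => excess_le ha _
    refine (Finset.sum_le_sum h1).trans ?_
    rw [← Finset.sum_div, div_le_iff₀ ha]
    nlinarith
  have hmain : ∀ k ∈ S, Integrable (fun ω => Z k ω * T ω ^ (p - 1)) μ ∧
      ∫ ω, Z k ω * T ω ^ (p - 1) ∂μ ≤
      2 ^ (p - 1) * (∫ ω, |X k ω| ^ p ∂μ + (∫ ω, Z k ω ∂μ) * Q) := by
    intro k hk
    have hZT : ∀ ω, Z k ω ≤ T ω := fun ω =>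
      Finset.single_le_sum (f := fun k => Z k ω) (fun j _ => hZ0 j ω) hk
    have i0 : Integrable (fun ω => Z k ω * T ω ^ (p - 1)) μ := by
      refine hTp.mono' ((hZm k hk).mul (hTm.pow_const _)).aestronglyMeasurable
        (Eventually.of_forall fun ω => ?_)
      rw [Real.norm_of_nonneg (mul_nonneg (hZ0 k ω) (Real.rpow_nonneg (hT0 ω) _)),
        ← mul_rpow_sub_one (hT0 ω) hp]
      exact mul_le_mul_of_nonneg_right (hZT ω) (Real.rpow_nonneg (hT0 ω) _)
    refine ⟨i0, ?_⟩
    set T' : Ω → ℝ := fun ω => ∑ j ∈ S.erase k, Z j ω with hT'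
    have hT'0 : ∀ ω, 0 ≤ T' ω := fun ω => Finset.sum_nonneg fun j _ => hZ0 j ω
    have hT'm : Measurable T' :=
      Finset.measurable_fun_sum _ fun j hj => hZm j (Finset.mem_of_mem_erase hj)
    have hsplit : ∀ ω, T ω = Z k ω + T' ω := fun ω =>
      (Finset.add_sum_erase S (fun j => Z j ω) hk).symm
    have hT'T : ∀ ω, T' ω ^ (p - 1) ≤ T ω ^ (p - 1) := fun ω =>
      Real.rpow_le_rpow (hT'0 ω) (by rw [hsplit]; linarith [hZ0 k ω]) hp1
    have i1 : Integrable (fun ω => T' ω ^ (p - 1)) μ :=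
      hTq.mono' (hT'm.pow_const _).aestronglyMeasurable (Eventually.of_forall fun ω => by
        rw [Real.norm_of_nonneg (Real.rpow_nonneg (hT'0 ω) _)]; exact hT'T ω)
    have i2 : Integrable (fun ω => Z k ω * T' ω ^ (p - 1)) μ :=
      i0.mono' ((hZm k hk).mul (hT'm.pow_const _)).aestronglyMeasurable
        (Eventually.of_forall fun ω => by
          rw [Real.norm_of_nonneg (mul_nonneg (hZ0 k ω) (Real.rpow_nonneg (hT'0 ω) _))]
          exact mul_le_mul_of_nonneg_left (hT'T ω) (hZ0 k ω))
    have hconv : ∀ ω, ∑ j : ↥(S.erase k), excess a (X j ω) = T' ω := fun ω =>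
      Finset.sum_coe_sort (S.erase k) (fun j => excess a (X j ω))
    have key := h.na {k} (S.erase k) (by simpa using hk)
      (by exact_mod_cast Finset.erase_subset k S) (by simp)
      (fun x => excess a (x ⟨k, Finset.mem_singleton_self k⟩))
      (fun x => (∑ j : ↥(S.erase k), excess a (x j)) ^ (p - 1))
      (fun x y hxy => excess_mono a (hxy _))
      (fun x y hxy => Real.rpow_le_rpow (Finset.sum_nonneg fun j _ => excess_nonneg _ _)
        (Finset.sum_le_sum fun j _ => excess_mono a (hxy j)) hp1)
      (hZi k hk) (by simpa only [hconv] using i1) (by simpa only [hconv] using i2)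
    simp only [hconv] at key
    have i3 : Integrable (fun ω => 2 ^ (p - 1) *
        (|X k ω| ^ p + Z k ω * T' ω ^ (p - 1))) μ := ((hpi k hk).add i2).const_mul _
    refine (integral_mono i0 i3 fun ω => ?_).trans ?_
    · have e1 := add_rpow_le_two (hZ0 k ω) (hT'0 ω) hp1
      have e2 := mul_le_mul_of_nonneg_left e1 (hZ0 k ω)
      have e3 : (0 : ℝ) ≤ 2 ^ (p - 1) := by positivity
      have e4 := mul_le_mul_of_nonneg_left (hZp k ω) e3
      rw [← mul_rpow_sub_one (hZ0 k ω) hp] at e4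
      simp only [hsplit]
      nlinarith
    · rw [integral_const_mul, integral_add (hpi k hk) i2]
      refine mul_le_mul_of_nonneg_left ?_ (by positivity)
      have e5 : (∫ ω, Z k ω ∂μ) * ∫ ω, T' ω ^ (p - 1) ∂μ ≤ (∫ ω, Z k ω ∂μ) * Q :=
        mul_le_mul_of_nonneg_left (integral_mono i1 hTq hT'T)
          (integral_nonneg fun ω => hZ0 k ω)
      have key' : ∫ ω, Z k ω * T' ω ^ (p - 1) ∂μ ≤
        (∫ ω, Z k ω ∂μ) * ∫ ω, T' ω ^ (p - 1) ∂μ := key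
      linarith
  refine ⟨hTp, ?_⟩
  set U := ∫ ω, T ω ^ p ∂μ with hU
  set G := ∑ k ∈ S, ∫ ω, |X k ω| ^ p ∂μ with hG
  have h1 : U ≤ 2 ^ (p - 1) * (G + a * Q) := by
    have e1 : U = ∑ k ∈ S, ∫ ω, Z k ω * T ω ^ (p - 1) ∂μ := by
      rw [← integral_finsetSum S fun k hk => (hmain k hk).1]
      refine integral_congr_ae (Eventually.of_forall fun ω => ?_)
      simp only [← Finset.sum_mul]
      exact (mul_rpow_sub_one (hT0 ω) hp).symm
    rw [e1]
    refine (Finset.sum_le_sum fun k hk => (hmain k hk).2).trans ?_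
    rw [← Finset.mul_sum, Finset.sum_add_distrib, ← Finset.sum_mul]
    refine mul_le_mul_of_nonneg_left ?_ (by positivity)
    have := mul_le_mul_of_nonneg_right hZmean hQ0
    linarith
  have h2 : a * Q ≤ U / 2 ^ p + (2 ^ p) ^ (p - 1) * a ^ p := by
    rw [hQ, hU, ← integral_const_mul, ← integral_div]
    have i5 : Integrable (fun ω => T ω ^ p / 2 ^ p + (2 ^ p) ^ (p - 1) * a ^ p) μ :=
      (hTp.div_const _).add (integrable_const _)
    refine (integral_mono (hTq.const_mul a) i5
      fun ω => young_aux ha.le (hT0 ω) hp (by positivity)).trans (le_of_eq ?_)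
    rw [integral_add (hTp.div_const _) (integrable_const _)]
    simp
  have h3 : (2 : ℝ) ^ p = 2 * 2 ^ (p - 1) := (mul_rpow_sub_one (by norm_num) hp).symm
  have h4 : (0 : ℝ) < 2 ^ (p - 1) := by positivity
  have h5 : 2 ^ (p - 1) * (U / 2 ^ p) = U / 2 := by
    rw [h3]; field_simp
  have h6 := mul_le_mul_of_nonneg_left h2 h4.le
  rw [mul_add, h5] at h6
  have h7 : (2 : ℝ) ^ p * (G + (2 ^ p) ^ (p - 1) * a ^ p) =
      2 * (2 ^ (p - 1) * G + 2 ^ (p - 1) * ((2 ^ p) ^ (p - 1) * a ^ p)) := by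
    nth_rewrite 1 [h3]; ring
  rw [h7]
  linarith

/-! ### Bracketing of lower rectangles -/

/-- Multi-scale approximation of the sets `A m`, `m ∈ M`, from inside by increasing sets `B v m`.
At scale `v` the error `A m \ B v m` is covered by a bracket from `upper v`, the increments
`B (v + 1) m \ B v m` are taken from `link v`, both families have at most `16 ^ ((v + 1) d)`
members, and every member has `g`-mass at most `K s / 16 ^ v`. -/
structure Bracketing {ι κ : Type} [DecidableEq ι] (S : Finset ι) (M : Finset κ)
    (A : κ → Finset ι) (g : ι → ℝ) (s K : ℝ) (d : ℕ) where
  B : ℕ → κ → Finset ι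
  upper : ℕ → Finset (Finset ι)
  link : ℕ → Finset (Finset ι)
  B_zero : ∀ m ∈ M, B 0 m = ∅
  B_mono : ∀ v, ∀ m ∈ M, B v m ⊆ B (v + 1) m
  B_sub : ∀ v, ∀ m ∈ M, B v m ⊆ A m
  link_mem : ∀ v, ∀ m ∈ M, B (v + 1) m \ B v m ∈ link v
  bracket : ∀ v, ∀ m ∈ M, ∃ L ∈ upper v, A m \ B v m ⊆ L
  upper_sub : ∀ v, ∀ L ∈ upper v, L ⊆ S
  link_sub : ∀ v, ∀ L ∈ link v, L ⊆ S
  upper_mass : ∀ v, ∀ L ∈ upper v, ∑ k ∈ L, g k ≤ K * (s / 16 ^ v)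
  link_mass : ∀ v, ∀ L ∈ link v, ∑ k ∈ L, g k ≤ K * (s / 16 ^ v)
  upper_card : ∀ v, (upper v).card ≤ (16 ^ (v + 1)) ^ d
  link_card : ∀ v, (link v).card ≤ (16 ^ (v + 1)) ^ d

/-- The mass of `{k ∈ S : k i ≤ t}`, in units of `s`. -/
def marg {d : ℕ} (S : Finset (Fin d → ℕ)) (g : (Fin d → ℕ) → ℝ) (s : ℝ) (i : Fin d) (t : ℕ) : ℝ :=
  (∑ k ∈ S with k i ≤ t, g k) / s

/-- The mass of `{k ∈ S : k i < t}`, in units of `s`. -/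
def margLt {d : ℕ} (S : Finset (Fin d → ℕ)) (g : (Fin d → ℕ) → ℝ) (s : ℝ) (i : Fin d)
    (t : ℕ) : ℝ :=
  (∑ k ∈ S with k i < t, g k) / s

/-- A slab on which the marginal distribution function stays within one cell of length `1 / q`
has mass at most `s / q`. Atoms do no harm, as the left limit at the first point of the slab is required
to lie in the cell as well. -/
theorem slab_mass {d : ℕ} {S : Finset (Fin d → ℕ)} {g : (Fin d → ℕ) → ℝ} (hg : ∀ k ∈ S, 0 ≤ g k)
    {s : ℝ} (hs : 0 < s) (i : Fin d) {q : ℝ} (hq : 0 < q) (j : ℝ) :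
    ∑ k ∈ S with j ≤ q * margLt S g s i (k i) ∧ q * marg S g s i (k i) < j + 1, g k ≤ s / q := by
  classical
  set P := {k ∈ S | j ≤ q * margLt S g s i (k i) ∧ q * marg S g s i (k i) < j + 1} with hP
  rcases P.eq_empty_or_nonempty with h0 | hne
  · rw [h0, Finset.sum_empty]; positivity
  obtain ⟨k₁, hk₁, hmin⟩ := P.exists_min_image (fun k => k i) hne
  obtain ⟨k₂, hk₂, hmax⟩ := P.exists_max_image (fun k => k i) hne
  have m1 := (Finset.mem_filter.1 hk₁).2.1
  have m2 := (Finset.mem_filter.1 hk₂).2.2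
  have hdisj : Disjoint P {k ∈ S | k i < k₁ i} := by
    rw [Finset.disjoint_left]
    intro k hk hk'
    exact absurd (Finset.mem_filter.1 hk').2 (not_lt.2 (hmin k hk))
  have hsub : P ∪ {k ∈ S | k i < k₁ i} ⊆ {k ∈ S | k i ≤ k₂ i} := by
    intro k hk
    rcases Finset.mem_union.1 hk with hk | hk
    · exact Finset.mem_filter.2 ⟨(Finset.mem_filter.1 hk).1, hmax k hk⟩
    · have := Finset.mem_filter.1 hk
      exact Finset.mem_filter.2 ⟨this.1, this.2.le.trans (hmax k₁ hk₁)⟩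
  have hle := Finset.sum_le_sum_of_subset_of_nonneg hsub
    (fun k hk _ => hg k (Finset.mem_filter.1 hk).1)
  rw [Finset.sum_union hdisj] at hle
  have e1 : ∑ k ∈ S with k i < k₁ i, g k = s * margLt S g s i (k₁ i) := by
    unfold margLt; field_simp
  have e2 : ∑ k ∈ S with k i ≤ k₂ i, g k = s * marg S g s i (k₂ i) := by
    unfold marg; field_simp
  rw [e1, e2] at hle
  rw [le_div_iff₀ hq]
  have e3 : q * marg S g s i (k₂ i) - q * margLt S g s i (k₁ i) ≤ 1 := by linarith
  have e4 := mul_le_mul_of_nonneg_left e3 hs.le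
  have e5 := mul_le_mul_of_nonneg_right hle hq.le
  nlinarith

/-- The rectangles `[1, m]` admit a bracketing. The approximation `B v m` is obtained by rounding
each marginal distribution function, evaluated at `m i`, down to the grid of mesh `16 ^ (-v)`. -/
theorem exists_bracketing {d : ℕ} (hd : 1 ≤ d) (n : Fin d → ℕ) (g : (Fin d → ℕ) → ℝ)
    (hg : ∀ k ∈ Finset.Icc 1 n, 0 ≤ g k) {s : ℝ} (hgs : ∑ k ∈ Finset.Icc 1 n, g k < s) :
    Nonempty (Bracketing (Finset.Icc 1 n) (Finset.Icc 1 n) (fun m => Finset.Icc 1 m) g s d d) := by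
  classical
  set S := Finset.Icc 1 n with hS
  have hs : 0 < s := lt_of_le_of_lt (Finset.sum_nonneg hg) hgs
  set F := marg S g s with hF
  set Fm := margLt S g s with hFm
  have hF0 : ∀ i t, 0 ≤ F i t := fun i t =>
    div_nonneg (Finset.sum_nonneg fun k hk => hg k (Finset.mem_filter.1 hk).1) hs.le
  have hFm0 : ∀ i t, 0 ≤ Fm i t := fun i t =>
    div_nonneg (Finset.sum_nonneg fun k hk => hg k (Finset.mem_filter.1 hk).1) hs.le
  have hF1 : ∀ i t, F i t < 1 := fun i t => by
    rw [hF, marg, div_lt_one hs]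
    exact lt_of_le_of_lt (Finset.sum_le_sum_of_subset_of_nonneg (Finset.filter_subset _ _)
      fun k hk _ => hg k hk) hgs
  have hFmono : ∀ i t t', t ≤ t' → F i t ≤ F i t' := fun i t t' htt =>
    div_le_div_of_nonneg_right (Finset.sum_le_sum_of_subset_of_nonneg
      (fun k hk => Finset.mem_filter.2
        ⟨(Finset.mem_filter.1 hk).1, (Finset.mem_filter.1 hk).2.trans htt⟩)
      fun k hk _ => hg k (Finset.mem_filter.1 hk).1) hs.le
  have hFFm : ∀ i t t', t < t' → F i t ≤ Fm i t' := fun i t t' htt =>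
    div_le_div_of_nonneg_right (Finset.sum_le_sum_of_subset_of_nonneg
      (fun k hk => Finset.mem_filter.2
        ⟨(Finset.mem_filter.1 hk).1, (Finset.mem_filter.1 hk).2.trans_lt htt⟩)
      fun k hk _ => hg k (Finset.mem_filter.1 hk).1) hs.le
  let J : ℕ → (Fin d → ℕ) → Fin d → ℕ := fun v m i => ⌊(16 : ℝ) ^ v * F i (m i)⌋₊
  let B' : ℕ → (Fin d → ℕ) → Finset (Fin d → ℕ) := fun v j =>
    {k ∈ S | ∀ i, (16 : ℝ) ^ v * Fm i (k i) < j i}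
  let L' : ℕ → (Fin d → ℕ) → Finset (Fin d → ℕ) := fun v j =>
    {k ∈ S | ∃ i, (j i : ℝ) ≤ 16 ^ v * Fm i (k i) ∧ (16 : ℝ) ^ v * F i (k i) < j i + 1}
  have hJle : ∀ v m i, (J v m i : ℝ) ≤ 16 ^ v * F i (m i) := fun v m i =>
    Nat.floor_le (mul_nonneg (by positivity) (hF0 _ _))
  have hJlt : ∀ v m i, (16 : ℝ) ^ v * F i (m i) < J v m i + 1 := fun v m i =>
    Nat.lt_floor_add_one _
  have hJbd : ∀ v m i, J v m i < 16 ^ v := fun v m i => by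
    have h1 := hJle v m i
    have h2 : (16 : ℝ) ^ v * F i (m i) < 16 ^ v := by
      have : (0 : ℝ) < 16 ^ v := by positivity
      nlinarith [hF1 i (m i)]
    have h3 : (J v m i : ℝ) < ((16 ^ v : ℕ) : ℝ) := by push_cast; linarith
    exact_mod_cast h3
  have hJsucc : ∀ v m, (fun i => J (v + 1) m i / 16) = J v m := by
    intro v m
    funext i
    have h := Nat.floor_div_natCast ((16 : ℝ) ^ (v + 1) * F i (m i)) 16
    have e : (16 : ℝ) ^ (v + 1) * F i (m i) / ((16 : ℕ) : ℝ) = 16 ^ v * F i (m i) := by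
      push_cast; rw [pow_succ]; ring
    rw [e] at h
    exact h.symm
  have hBsub : ∀ v m, B' v (J v m) ⊆ Finset.Icc 1 m := by
    intro v m k hk
    have hk := Finset.mem_filter.1 hk
    rw [Finset.mem_Icc]
    refine ⟨(Finset.mem_Icc.1 hk.1).1, fun i => ?_⟩
    by_contra hlt
    have h1 := hFFm i _ _ (not_le.1 hlt)
    have h2 := hk.2 i
    have h3 := hJle v m i
    have : (16 : ℝ) ^ v * F i (m i) ≤ 16 ^ v * Fm i (k i) :=
      mul_le_mul_of_nonneg_left h1 (by positivity)
    linarith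
  have hBmono : ∀ v m, B' v (J v m) ⊆ B' (v + 1) (J (v + 1) m) := by
    intro v m k hk
    have hk := Finset.mem_filter.1 hk
    refine Finset.mem_filter.2 ⟨hk.1, fun i => ?_⟩
    have h1 := hk.2 i
    have h2 : 16 * J v m i ≤ J (v + 1) m i := by
      have := congrFun (hJsucc v m) i
      omega
    have h3 : (16 : ℝ) * J v m i ≤ J (v + 1) m i := by exact_mod_cast h2
    rw [pow_succ]
    linarith
  have hcover : ∀ v, ∀ m ∈ S, Finset.Icc 1 m \ B' v (J v m) ⊆ L' v (J v m) := by
    intro v m hm k hk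
    rw [Finset.mem_sdiff, Finset.mem_Icc] at hk
    have hkS : k ∈ S := Finset.mem_Icc.2 ⟨hk.1.1, hk.1.2.trans (Finset.mem_Icc.1 hm).2⟩
    have h2 : ¬ ∀ i, (16 : ℝ) ^ v * Fm i (k i) < J v m i := fun hall =>
      hk.2 (Finset.mem_filter.2 ⟨hkS, hall⟩)
    obtain ⟨i, hi⟩ := not_forall.1 h2
    refine Finset.mem_filter.2 ⟨hkS, i, not_lt.1 hi, lt_of_le_of_lt ?_ (hJlt v m i)⟩
    exact mul_le_mul_of_nonneg_left (hFmono i _ _ (hk.1.2 i)) (by positivity)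
  have hLmass : ∀ v j, ∑ k ∈ L' v j, g k ≤ d * (s / 16 ^ v) := by
    intro v j
    calc ∑ k ∈ L' v j, g k
        ≤ ∑ i : Fin d, ∑ k ∈ S with (j i : ℝ) ≤ 16 ^ v * Fm i (k i) ∧
            (16 : ℝ) ^ v * F i (k i) < j i + 1, g k := by
          simp only [L', Finset.sum_filter]
          rw [Finset.sum_comm]
          refine Finset.sum_le_sum fun k hk => ?_
          have hnn : ∀ i ∈ (Finset.univ : Finset (Fin d)), 0 ≤
              if (j i : ℝ) ≤ 16 ^ v * Fm i (k i) ∧ (16 : ℝ) ^ v * F i (k i) < j i + 1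
              then g k else 0 := fun i _ => by split_ifs <;> [exact hg k hk; exact le_rfl]
          split_ifs with hex
          · obtain ⟨i, hi⟩ := hex
            refine le_trans ?_ (Finset.single_le_sum hnn (Finset.mem_univ i))
            rw [if_pos hi]
          · exact Finset.sum_nonneg hnn
      _ ≤ ∑ i : Fin d, s / 16 ^ v :=
          Finset.sum_le_sum fun i _ => slab_mass hg hs i (by positivity) _
      _ = d * (s / 16 ^ v) := by simp
  have hcard : ∀ v, (S.image (J v)).card ≤ (16 ^ v) ^ d := by
    intro v
    have hsub : S.image (J v) ⊆ Fintype.piFinset fun _ : Fin d => Finset.range (16 ^ v) := by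
      intro j hj
      obtain ⟨m, -, rfl⟩ := Finset.mem_image.1 hj
      exact Fintype.mem_piFinset.2 fun i => Finset.mem_range.2 (hJbd v m i)
    refine (Finset.card_le_card hsub).trans (le_of_eq ?_)
    simp
  let D' : ℕ → (Fin d → ℕ) → Finset (Fin d → ℕ) := fun v j =>
    B' (v + 1) j \ B' v (fun i => j i / 16)
  have hD' : ∀ v m, D' v (J (v + 1) m) = B' (v + 1) (J (v + 1) m) \ B' v (J v m) := by
    intro v m
    simp only [D', hJsucc]
  refine ⟨{
    B := fun v m => B' v (J v m)
    upper := fun v => (S.image (J v)).image (L' v)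
    link := fun v => (S.image (J (v + 1))).image (D' v)
    B_zero := ?_
    B_mono := fun v m _ => hBmono v m
    B_sub := fun v m _ => hBsub v m
    link_mem := ?_
    bracket := ?_
    upper_sub := ?_
    link_sub := ?_
    upper_mass := ?_
    link_mass := ?_
    upper_card := ?_
    link_card := ?_ }⟩
  · intro m _
    refine Finset.filter_eq_empty_iff.2 fun k _ hall => ?_
    have h1 := hall ⟨0, hd⟩
    have h2 := hJbd 0 m ⟨0, hd⟩
    have h3 : J 0 m ⟨0, hd⟩ = 0 := by simpa using h2
    rw [h3] at h1
    have := hFm0 ⟨0, hd⟩ (k ⟨0, hd⟩)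
    simp at h1
    linarith
  · intro v m hm
    rw [← hD']
    exact Finset.mem_image_of_mem _ (Finset.mem_image_of_mem _ hm)
  · intro v m hm
    exact ⟨_, Finset.mem_image_of_mem _ (Finset.mem_image_of_mem _ hm), hcover v m hm⟩
  · intro v L hL
    obtain ⟨j, -, rfl⟩ := Finset.mem_image.1 hL
    exact Finset.filter_subset _ _
  · intro v L hL
    obtain ⟨j, -, rfl⟩ := Finset.mem_image.1 hL
    exact Finset.sdiff_subset.trans (Finset.filter_subset _ _)
  · intro v L hL
    obtain ⟨j, -, rfl⟩ := Finset.mem_image.1 hL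
    exact hLmass v j
  · intro v L hL
    obtain ⟨j, hj, rfl⟩ := Finset.mem_image.1 hL
    obtain ⟨m, hm, rfl⟩ := Finset.mem_image.1 hj
    rw [hD']
    refine (Finset.sum_le_sum_of_subset_of_nonneg
      ((Finset.sdiff_subset_sdiff (hBsub (v + 1) m) le_rfl).trans (hcover v m hm))
      fun k hk _ => hg k (Finset.mem_filter.1 hk).1).trans (hLmass v _)
  · intro v
    refine Finset.card_image_le.trans ((hcard v).trans ?_)
    exact Nat.pow_le_pow_left (Nat.pow_le_pow_right (by norm_num) (Nat.le_succ v)) d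
  · intro v
    exact Finset.card_image_le.trans (hcard (v + 1))

/-! ### Chaining -/

/-- The chaining decomposition. The truncation level is lowered by a factor `4` at each scale:
values lost in passing to the next level are summed up in absolute value over a bracket, what
remains is summed over a link. -/
theorem Bracketing.chain {ι κ : Type} [DecidableEq ι] {S : Finset ι} {M : Finset κ}
    {A : κ → Finset ι} {g : ι → ℝ} {s K : ℝ} {d : ℕ} (b : Bracketing S M A g s K d)
    {σ : ℝ} (hσ : 0 < σ) (x : ι → ℝ) {m : κ} (hm : m ∈ M) (L : ℕ → Finset ι)
    (hL : ∀ v, A m \ b.B v m ⊆ L v) (V : ℕ) :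
    |∑ k ∈ A m, clip σ (x k)| ≤
      ∑ v ∈ Finset.range V, (|∑ k ∈ b.B (v + 1) m \ b.B v m, clip (σ / 4 ^ (v + 1)) (x k)| +
        ∑ k ∈ L v, bump (σ / 4 ^ v) (x k) + ∑ k ∈ L v, bump (σ / 4 ^ v) (- x k)) +
      |∑ k ∈ A m \ b.B V m, clip (σ / 4 ^ V) (x k)| := by
  induction V with
  | zero => simp [b.B_zero m hm]
  | succ v ih =>
    rw [Finset.sum_range_succ]
    have ha : 0 < σ / 4 ^ v := by positivity
    have ha' : σ / 4 ^ (v + 1) = σ / 4 ^ v / 4 := by rw [pow_succ, div_div]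
    have hdis : Disjoint (b.B (v + 1) m \ b.B v m) (A m \ b.B (v + 1) m) :=
      Finset.disjoint_left.2 fun k hk hk' =>
        (Finset.mem_sdiff.1 hk').2 (Finset.mem_sdiff.1 hk).1
    have hun : A m \ b.B v m = (b.B (v + 1) m \ b.B v m) ∪ (A m \ b.B (v + 1) m) := by
      ext k
      have h1 : k ∈ b.B v m → k ∈ b.B (v + 1) m := fun hk => b.B_mono v m hm hk
      have h2 : k ∈ b.B (v + 1) m → k ∈ A m := fun hk => b.B_sub (v + 1) m hm hk
      simp only [Finset.mem_sdiff, Finset.mem_union]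
      tauto
    have hsplit : ∑ k ∈ A m \ b.B v m, clip (σ / 4 ^ v) (x k) =
        ∑ k ∈ A m \ b.B v m, (clip (σ / 4 ^ v) (x k) - clip (σ / 4 ^ (v + 1)) (x k)) +
        (∑ k ∈ b.B (v + 1) m \ b.B v m, clip (σ / 4 ^ (v + 1)) (x k) +
        ∑ k ∈ A m \ b.B (v + 1) m, clip (σ / 4 ^ (v + 1)) (x k)) := by
      rw [← Finset.sum_union hdis, ← hun, Finset.sum_sub_distrib]
      ring
    have h1 : |∑ k ∈ A m \ b.B v m,
        (clip (σ / 4 ^ v) (x k) - clip (σ / 4 ^ (v + 1)) (x k))| ≤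
        ∑ k ∈ L v, bump (σ / 4 ^ v) (x k) + ∑ k ∈ L v, bump (σ / 4 ^ v) (- x k) := by
      rw [← Finset.sum_add_distrib]
      refine (Finset.abs_sum_le_sum_abs _ _).trans ?_
      refine (Finset.sum_le_sum fun k _ => ?_).trans
        (Finset.sum_le_sum_of_subset_of_nonneg (hL v) fun k _ _ =>
          add_nonneg (bump_nonneg _ _) (bump_nonneg _ _))
      rw [ha']
      exact abs_clip_sub_clip ha (x k)
    have h2 := abs_add_le (∑ k ∈ A m \ b.B v m,
      (clip (σ / 4 ^ v) (x k) - clip (σ / 4 ^ (v + 1)) (x k)))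
      (∑ k ∈ b.B (v + 1) m \ b.B v m, clip (σ / 4 ^ (v + 1)) (x k) +
        ∑ k ∈ A m \ b.B (v + 1) m, clip (σ / 4 ^ (v + 1)) (x k))
    have h3 := abs_add_le (∑ k ∈ b.B (v + 1) m \ b.B v m, clip (σ / 4 ^ (v + 1)) (x k))
      (∑ k ∈ A m \ b.B (v + 1) m, clip (σ / 4 ^ (v + 1)) (x k))
    rw [← hsplit] at h2
    linarith

/-- A geometrically weighted substitute for the triangle inequality in `ℓ^r`. -/
theorem sum_pow_le_weighted (V r : ℕ) (y : ℕ → ℝ) (hy : ∀ v, 0 ≤ y v) (hr : r ≠ 0) :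
    (∑ v ∈ Finset.range V, y v) ^ r ≤ 2 ^ r * ∑ v ∈ Finset.range V, (2 ^ v * y v) ^ r := by
  rcases (Finset.range V).eq_empty_or_nonempty with h0 | hne
  · rw [h0]; simp [hr]
  obtain ⟨u, hu, hmax⟩ := (Finset.range V).exists_max_image (fun v => 2 ^ v * y v) hne
  have h1 : ∑ v ∈ Finset.range V, y v ≤ 2 * (2 ^ u * y u) := by
    have h2 : ∑ v ∈ Finset.range V, y v ≤
        ∑ v ∈ Finset.range V, (1 / 2 : ℝ) ^ v * (2 ^ u * y u) := by
      refine Finset.sum_le_sum fun v hv => ?_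
      have h3 := mul_le_mul_of_nonneg_left (hmax v hv) (by positivity : (0 : ℝ) ≤ (1 / 2) ^ v)
      rwa [← mul_assoc, ← mul_pow, show (1 / 2 : ℝ) * 2 = 1 by norm_num, one_pow, one_mul] at h3
    refine h2.trans ?_
    rw [← Finset.sum_mul]
    refine mul_le_mul_of_nonneg_right ?_ (mul_nonneg (by positivity) (hy u))
    exact sum_geometric_two_le V
  calc (∑ v ∈ Finset.range V, y v) ^ r ≤ (2 * (2 ^ u * y u)) ^ r :=
        pow_le_pow_left₀ (Finset.sum_nonneg fun v _ => hy v) h1 r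
    _ = 2 ^ r * (2 ^ u * y u) ^ r := mul_pow _ _ _
    _ ≤ _ := by
        refine mul_le_mul_of_nonneg_left ?_ (by positivity)
        exact Finset.single_le_sum (f := fun v => (2 ^ v * y v) ^ r)
          (fun v _ => pow_nonneg (mul_nonneg (by positivity) (hy v)) r) hu

theorem add_three_pow_le (r : ℕ) {x y z : ℝ} (hx : 0 ≤ x) (hy : 0 ≤ y) (hz : 0 ≤ z) :
    (x + y + z) ^ r ≤ 3 ^ r * (x ^ r + y ^ r + z ^ r) := by
  have px := pow_nonneg hx r
  have py := pow_nonneg hy r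
  have pz := pow_nonneg hz r
  have main : ∀ w, 0 ≤ w → x ≤ w → y ≤ w → z ≤ w → w ^ r ≤ x ^ r + y ^ r + z ^ r →
      (x + y + z) ^ r ≤ 3 ^ r * (x ^ r + y ^ r + z ^ r) := by
    intro w hw h1 h2 h3 h4
    calc (x + y + z) ^ r ≤ (3 * w) ^ r := pow_le_pow_left₀ (by positivity) (by linarith) r
      _ = 3 ^ r * w ^ r := mul_pow _ _ _
      _ ≤ _ := mul_le_mul_of_nonneg_left h4 (by positivity)
  rcases le_total x y with h1 | h1 <;> rcases le_total y z with h2 | h2 <;>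
    rcases le_total x z with h3 | h3
  · exact main z hz h3 h2 le_rfl (by linarith)
  · exact main z hz (h1.trans h2) h2 le_rfl (by linarith)
  · exact main y hy h1 le_rfl h2 (by linarith)
  · exact main y hy h1 le_rfl h2 (by linarith)
  · exact main z hz h3 h2 le_rfl (by linarith)
  · exact main x hx le_rfl h1 h3 (by linarith)
  · exact main x hx le_rfl h1 (h2.trans h1) (by linarith)
  · exact main x hx le_rfl h1 h3 (by linarith)

/-- The sum, over all links and brackets of scale `v`, of the `r`-th powers that dominate the
scale-`v` term of the chaining decomposition. -/
def Bracketing.levelSum {ι κ : Type} [DecidableEq ι] {S : Finset ι} {M : Finset κ}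
    {A : κ → Finset ι} {g : ι → ℝ} {s K : ℝ} {d : ℕ} (b : Bracketing S M A g s K d)
    (σ : ℝ) (r v : ℕ) (x : ι → ℝ) : ℝ :=
  ∑ D ∈ b.link v, |∑ k ∈ D, clip (σ / 4 ^ (v + 1)) (x k)| ^ r +
    ∑ L ∈ b.upper v, (∑ k ∈ L, bump (σ / 4 ^ v) (x k)) ^ r +
    ∑ L ∈ b.upper v, (∑ k ∈ L, bump (σ / 4 ^ v) (- x k)) ^ r

/-- Pointwise form of the maximal inequality, with the same right-hand side for all `m ∈ M`. -/
theorem Bracketing.chain_pow {ι κ : Type} [DecidableEq ι] {S : Finset ι} {M : Finset κ}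
    {A : κ → Finset ι} {g : ι → ℝ} {s K : ℝ} {d : ℕ} (b : Bracketing S M A g s K d)
    {σ : ℝ} (hσ : 0 < σ) (x : ι → ℝ) (hA : ∀ m ∈ M, A m ⊆ S) {V : ℕ}
    (hV : S.card * (σ / 4 ^ V) ≤ σ) {r : ℕ} (hr : r ≠ 0) {m : κ} (hm : m ∈ M) :
    ∃ T : ℝ, 0 ≤ T ∧
      T ^ r ≤ 6 ^ r * ∑ v ∈ Finset.range V, 2 ^ (r * v) * b.levelSum σ r v x ∧
      |∑ k ∈ A m, x k| ≤ ∑ k ∈ S, excess σ (x k) + ∑ k ∈ S, excess σ (- x k) + T + σ := by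
  choose L hLmem hL using fun v => b.bracket v m hm
  set y : ℕ → ℝ := fun v =>
    |∑ k ∈ b.B (v + 1) m \ b.B v m, clip (σ / 4 ^ (v + 1)) (x k)| +
        ∑ k ∈ L v, bump (σ / 4 ^ v) (x k) + ∑ k ∈ L v, bump (σ / 4 ^ v) (- x k) with hydef
  have hb : ∀ v (D : Finset ι) (z : ι → ℝ), 0 ≤ ∑ k ∈ D, bump (σ / 4 ^ v) (z k) := fun v D z =>
    Finset.sum_nonneg fun k _ => bump_nonneg _ _
  have hy : ∀ v, 0 ≤ y v := fun v =>
    add_nonneg (add_nonneg (abs_nonneg _) (hb v _ x)) (hb v _ fun k => - x k)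
  have hyr : ∀ v, y v ^ r ≤ 3 ^ r * b.levelSum σ r v x := by
    intro v
    refine (add_three_pow_le r (abs_nonneg _) (hb v _ x) (hb v _ fun k => - x k)).trans ?_
    refine mul_le_mul_of_nonneg_left ?_ (by positivity)
    unfold Bracketing.levelSum
    refine add_le_add (add_le_add ?_ ?_) ?_
    · exact Finset.single_le_sum
        (f := fun D => |∑ k ∈ D, clip (σ / 4 ^ (v + 1)) (x k)| ^ r)
        (fun D _ => pow_nonneg (abs_nonneg _) r) (b.link_mem v m hm)
    · exact Finset.single_le_sum (f := fun D => (∑ k ∈ D, bump (σ / 4 ^ v) (x k)) ^ r)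
        (fun D _ => pow_nonneg (hb v D x) r) (hLmem v)
    · exact Finset.single_le_sum (f := fun D => (∑ k ∈ D, bump (σ / 4 ^ v) (- x k)) ^ r)
        (fun D _ => pow_nonneg (hb v D fun k => - x k) r) (hLmem v)
  refine ⟨∑ v ∈ Finset.range V, y v, Finset.sum_nonneg fun v _ => hy v, ?_, ?_⟩
  · refine (sum_pow_le_weighted V r y hy hr).trans ?_
    have h6 : (6 : ℝ) ^ r = 2 ^ r * 3 ^ r := by rw [← mul_pow]; norm_num
    rw [h6, mul_assoc]
    refine mul_le_mul_of_nonneg_left ?_ (by positivity)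
    rw [Finset.mul_sum]
    refine Finset.sum_le_sum fun v _ => ?_
    rw [mul_pow, ← pow_mul, mul_comm v r]
    have := mul_le_mul_of_nonneg_left (hyr v) (by positivity : (0 : ℝ) ≤ 2 ^ (r * v))
    linarith
  · have h1 := b.chain hσ x hm L hL V
    have h2 : |∑ k ∈ A m \ b.B V m, clip (σ / 4 ^ V) (x k)| ≤ σ := by
      refine (Finset.abs_sum_le_sum_abs _ _).trans (le_trans ?_ hV)
      refine (Finset.sum_le_sum fun k _ => abs_clip_le (by positivity) (x k)).trans ?_
      rw [Finset.sum_const, nsmul_eq_mul]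
      refine mul_le_mul_of_nonneg_right ?_ (by positivity)
      exact_mod_cast Finset.card_le_card (Finset.sdiff_subset.trans (hA m hm))
    have h3 : |∑ k ∈ A m, (x k - clip σ (x k))| ≤
        ∑ k ∈ S, excess σ (x k) + ∑ k ∈ S, excess σ (- x k) := by
      rw [← Finset.sum_add_distrib]
      refine (Finset.abs_sum_le_sum_abs _ _).trans ?_
      exact (Finset.sum_le_sum fun k _ => abs_sub_clip hσ (x k)).trans
        (Finset.sum_le_sum_of_subset_of_nonneg (hA m hm) fun k _ _ =>
          add_nonneg (excess_nonneg _ _) (excess_nonneg _ _))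
    have h4 : ∑ k ∈ A m, x k = ∑ k ∈ A m, (x k - clip σ (x k)) + ∑ k ∈ A m, clip σ (x k) := by
      rw [← Finset.sum_add_distrib]; simp
    rw [h4]
    have h5 := abs_add_le (∑ k ∈ A m, (x k - clip σ (x k))) (∑ k ∈ A m, clip σ (x k))
    linarith

theorem Bracketing.levelSum_moment {Ω : Type} [MeasurableSpace Ω] {μ : Measure Ω}
    [IsProbabilityMeasure μ] {ι κ : Type} [DecidableEq ι] {S : Finset ι} {M : Finset κ}
    {A : κ → Finset ι} {X : ι → Ω → ℝ} (h : CentredNA μ X S) {σ : ℝ} (hσ : 0 < σ) {d : ℕ}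
    (b : Bracketing S M A (fun k => ∫ ω, X k ω ^ 2 ∂μ) (σ ^ 2) d d) (r v : ℕ) :
    Integrable (fun ω => b.levelSum σ r v (fun k => X k ω)) μ ∧
    ∫ ω, b.levelSum σ r v (fun k => X k ω) ∂μ ≤
      (16 ^ (v + 1)) ^ d * (4 * ((r.factorial : ℝ) * (σ / 4 ^ v) ^ r * Real.exp (80 * d))) := by
  have ha : 0 < σ / 4 ^ v := by positivity
  have ha' : 0 < σ / 4 ^ (v + 1) := by positivity
  have e16 : ∀ w : ℕ, ((4 : ℝ) ^ w) ^ 2 = 16 ^ w := fun w => by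
    rw [← pow_mul, mul_comm, pow_mul]; norm_num
  have hd0 : (0 : ℝ) ≤ d := Nat.cast_nonneg d
  set c : ℝ := (r.factorial : ℝ) * (σ / 4 ^ v) ^ r * Real.exp (80 * d) with hc
  have hc0 : 0 ≤ c := by positivity
  have h5 : (r.factorial : ℝ) * (σ / 4 ^ v) ^ r * Real.exp (5 * d) ≤ c :=
    mul_le_mul_of_nonneg_left (Real.exp_le_exp.2 (by linarith)) (by positivity)
  have c1 : ∀ D ∈ b.link v, Integrable
      (fun ω => |∑ k ∈ D, clip (σ / 4 ^ (v + 1)) (X k ω)| ^ r) μ ∧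
      ∫ ω, |∑ k ∈ D, clip (σ / 4 ^ (v + 1)) (X k ω)| ^ r ∂μ ≤ 2 * c := by
    intro D hD
    have hmass := b.link_mass v D hD
    have := h.clip_moment (K := 16 * d) ha' D (b.link_sub v D hD) r (hmass.trans (le_of_eq (by
      rw [div_pow, e16]; field_simp; ring)))
    refine ⟨this.1, this.2.trans ?_⟩
    rw [show (5 : ℝ) * (16 * d) = 80 * d by ring]
    refine mul_le_mul_of_nonneg_left ?_ (by norm_num)
    refine mul_le_mul_of_nonneg_right (mul_le_mul_of_nonneg_left ?_ (by positivity))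
      (Real.exp_pos _).le
    refine pow_le_pow_left₀ ha'.le ?_ r
    exact div_le_div_of_nonneg_left hσ.le (by positivity)
      (pow_le_pow_right₀ (by norm_num) (Nat.le_succ v))
  have c2 : ∀ Z : ι → Ω → ℝ, CentredNA μ Z S → (∀ k, ∫ ω, Z k ω ^ 2 ∂μ = ∫ ω, X k ω ^ 2 ∂μ) →
      ∀ L ∈ b.upper v, Integrable (fun ω => (∑ k ∈ L, bump (σ / 4 ^ v) (Z k ω)) ^ r) μ ∧
      ∫ ω, (∑ k ∈ L, bump (σ / 4 ^ v) (Z k ω)) ^ r ∂μ ≤ c := by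
    intro Z hZ hZX L hL
    have hmass := b.upper_mass v L hL
    have := hZ.bump_moment (K := d) ha L (b.upper_sub v L hL) r (by
      simp only [hZX]
      refine hmass.trans (le_of_eq (by rw [div_pow, e16])))
    exact ⟨this.1, this.2.trans h5⟩
  have c3 := c2 X h fun k => rfl
  have c4 := c2 _ h.neg fun k => by simp
  have i1 := integrable_finsetSum (b.link v) fun D hD => (c1 D hD).1
  have i2 := integrable_finsetSum (b.upper v) fun D hD => (c3 D hD).1
  have i3 := integrable_finsetSum (b.upper v) fun D hD => (c4 D hD).1
  refine ⟨(i1.add i2).add i3, ?_⟩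
  have hcl : ((b.link v).card : ℝ) ≤ (16 ^ (v + 1)) ^ d := by exact_mod_cast b.link_card v
  have hcu : ((b.upper v).card : ℝ) ≤ (16 ^ (v + 1)) ^ d := by exact_mod_cast b.upper_card v
  have s1 := (integral_finsetSum (b.link v) fun D hD => (c1 D hD).1).trans_le
    (Finset.sum_le_card_nsmul _ _ _ fun D hD => (c1 D hD).2)
  have s2 := (integral_finsetSum (b.upper v) fun D hD => (c3 D hD).1).trans_le
    (Finset.sum_le_card_nsmul _ _ _ fun D hD => (c3 D hD).2)
  have s3 := (integral_finsetSum (b.upper v) fun D hD => (c4 D hD).1).trans_le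
    (Finset.sum_le_card_nsmul _ _ _ fun D hD => (c4 D hD).2)
  rw [nsmul_eq_mul] at s1 s2 s3
  have t1 := mul_le_mul_of_nonneg_right hcl (by linarith : 0 ≤ 2 * c)
  have t2 := mul_le_mul_of_nonneg_right hcu hc0
  unfold Bracketing.levelSum
  have i12 : Integrable (fun ω => ∑ D ∈ b.link v, |∑ k ∈ D, clip (σ / 4 ^ (v + 1)) (X k ω)| ^ r +
    ∑ L ∈ b.upper v, (∑ k ∈ L, bump (σ / 4 ^ v) (X k ω)) ^ r) μ := i1.add i2
  rw [integral_add i12 i3, integral_add i1 i2]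
  linarith

/-! ### The maximal inequality -/

theorem add_four_rpow_le {p x y z w : ℝ} (hp : 0 ≤ p) (hx : 0 ≤ x) (hy : 0 ≤ y) (hz : 0 ≤ z)
    (hw : 0 ≤ w) : (x + y + z + w) ^ p ≤ 4 ^ p * (x ^ p + y ^ p + z ^ p + w ^ p) := by
  have h1 := add_rpow_le_two (add_nonneg hx hy) (add_nonneg hz hw) hp
  have h2 := add_rpow_le_two hx hy hp
  have h3 := add_rpow_le_two hz hw hp
  have h4 : (4 : ℝ) ^ p = 2 ^ p * 2 ^ p := by
    rw [← Real.mul_rpow (by norm_num) (by norm_num)]; norm_num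
  have h5 : (0 : ℝ) ≤ 2 ^ p := by positivity
  have h6 := mul_le_mul_of_nonneg_left (add_le_add h2 h3) h5
  rw [h4, show x + y + z + w = (x + y) + (z + w) by ring]
  linarith

/-- Comparison of a `p`-th with a higher `r`-th power, relative to the unit `σ`. -/
theorem rpow_le_of_pow {T σ p : ℝ} {r : ℕ} (hT : 0 ≤ T) (hσ : 0 < σ) (hp : 0 ≤ p)
    (hpr : p ≤ r) : T ^ p ≤ σ ^ p + σ ^ p * (T ^ r / σ ^ r) := by
  have hs : 0 ≤ σ ^ p := Real.rpow_nonneg hσ.le p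
  rcases le_total T σ with h | h
  · have : 0 ≤ σ ^ p * (T ^ r / σ ^ r) := by positivity
    linarith [Real.rpow_le_rpow hT h hp]
  · have h1 : 1 ≤ T / σ := (one_le_div hσ).2 h
    have h2 := Real.rpow_le_rpow_of_exponent_le h1 hpr
    rw [Real.rpow_natCast, div_pow, Real.div_rpow hT hσ.le, div_le_iff₀ (by positivity)] at h2
    linarith

theorem geometric_levels {d r : ℕ} (hr : 4 * d + 1 ≤ r) (V : ℕ) {σ c : ℝ} (hσ : 0 < σ)
    (hc : 0 ≤ c) :
    ∑ v ∈ Finset.range V, (2 : ℝ) ^ (r * v) * ((16 ^ (v + 1)) ^ d * (c * (σ / 4 ^ v) ^ r)) ≤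
      2 * (16 ^ d * c * σ ^ r) := by
  have hterm : ∀ v : ℕ, (2 : ℝ) ^ (r * v) * ((16 ^ (v + 1)) ^ d * (c * (σ / 4 ^ v) ^ r)) ≤
      (1 / 2) ^ v * (16 ^ d * c * σ ^ r) := by
    intro v
    have e1 : (2 : ℝ) ^ (r * v) * ((16 ^ (v + 1)) ^ d * (c * (σ / 4 ^ v) ^ r)) =
        (2 ^ (r * v) * (16 ^ v) ^ d / (4 ^ v) ^ r) * (16 ^ d * c * σ ^ r) := by
      rw [pow_succ, mul_pow, div_pow]; ring
    rw [e1]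
    refine mul_le_mul_of_nonneg_right ?_ (by positivity)
    have e2 : ((4 : ℝ) ^ v) ^ r = 2 ^ (r * v) * 2 ^ (r * v) := by
      rw [← pow_mul, ← mul_pow, mul_comm v r]; norm_num
    have e3 : ((16 : ℝ) ^ v) ^ d = 2 ^ (4 * d * v) := by
      rw [show (16 : ℝ) = 2 ^ 4 by norm_num, ← pow_mul, ← pow_mul]; congr 1; ring
    rw [e2, e3, div_le_iff₀ (by positivity), one_div, inv_pow, mul_comm, inv_mul_eq_div,
      le_div_iff₀ (by positivity)]
    have e4 : (2 : ℝ) ^ (4 * d * v) * 2 ^ v ≤ 2 ^ (r * v) := by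
      rw [← pow_add]
      refine pow_le_pow_right₀ (by norm_num) ?_
      calc 4 * d * v + v = (4 * d + 1) * v := by ring
        _ ≤ r * v := Nat.mul_le_mul_right v hr
    have := mul_le_mul_of_nonneg_right e4 (by positivity : (0 : ℝ) ≤ 2 ^ (r * v))
    linarith
  refine (Finset.sum_le_sum fun v _ => hterm v).trans ?_
  rw [← Finset.sum_mul]
  exact mul_le_mul_of_nonneg_right (sum_geometric_two_le V) (by positivity)

/-- The maximal inequality for any family of sets that admits a bracketing. -/
theorem Bracketing.max_moment {Ω : Type} [MeasurableSpace Ω] {μ : Measure Ω}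
    [IsProbabilityMeasure μ] {ι κ : Type} [DecidableEq ι] {S : Finset ι} {M : Finset κ}
    {A : κ → Finset ι} {X : ι → Ω → ℝ} (h : CentredNA μ X S) {σ : ℝ} (hσ : 0 < σ) {d : ℕ}
    (b : Bracketing S M A (fun k => ∫ ω, X k ω ^ 2 ∂μ) (σ ^ 2) d d)
    (hA : ∀ m ∈ M, A m ⊆ S) (hM : M.Nonempty) {p : ℝ} (hp : 1 < p)
    (hpi : ∀ k ∈ S, Integrable (fun ω => |X k ω| ^ p) μ)
    (hS : ∑ k ∈ S, ∫ ω, X k ω ^ 2 ∂μ ≤ σ ^ 2) {r : ℕ} (hr : 4 * d + 1 ≤ r) (hpr : p ≤ r) :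
    ∫ ω, (M.sup' hM fun m => |∑ k ∈ A m, X k ω|) ^ p ∂μ ≤
      4 ^ p * (2 * (2 ^ p * (∑ k ∈ S, ∫ ω, |X k ω| ^ p ∂μ + (2 ^ p) ^ (p - 1) * σ ^ p)) +
        2 * σ ^ p + σ ^ p *
          (6 ^ r * (2 * (16 ^ d * (4 * ((r.factorial : ℝ) * Real.exp (80 * d))))))) := by
  have hp0 : 0 ≤ p := by linarith
  have hr0 : r ≠ 0 := by omega
  -- A scale so fine that the untreated remainder is at most `σ`.
  obtain ⟨V, hV⟩ : ∃ V : ℕ, S.card * (σ / 4 ^ V) ≤ σ := by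
    obtain ⟨V, hV⟩ := pow_unbounded_of_one_lt (S.card : ℝ) (by norm_num : (1 : ℝ) < 4)
    refine ⟨V, ?_⟩
    rw [mul_div_assoc', div_le_iff₀ (by positivity), mul_comm]
    exact mul_le_mul_of_nonneg_left hV.le hσ.le
  set Q : Ω → ℝ := fun ω =>
    6 ^ r * ∑ v ∈ Finset.range V, 2 ^ (r * v) * b.levelSum σ r v (fun k => X k ω) with hQ
  have hQi : Integrable Q μ := (integrable_finsetSum _ fun v _ =>
    (b.levelSum_moment h hσ r v).1.const_mul _).const_mul _
  set c : ℝ := 4 * ((r.factorial : ℝ) * Real.exp (80 * d)) with hc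
  have hc0 : 0 ≤ c := by positivity
  have hQb : ∫ ω, Q ω ∂μ ≤ 6 ^ r * (2 * (16 ^ d * c * σ ^ r)) := by
    rw [hQ, integral_const_mul, integral_finsetSum _ fun v _ =>
      (b.levelSum_moment h hσ r v).1.const_mul _]
    refine mul_le_mul_of_nonneg_left ?_ (by positivity)
    refine le_trans (Finset.sum_le_sum fun v _ => ?_) (geometric_levels hr V hσ hc0)
    rw [integral_const_mul]
    refine mul_le_mul_of_nonneg_left ?_ (by positivity)
    refine (b.levelSum_moment h hσ r v).2.trans (le_of_eq ?_)
    rw [hc]; ring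
  obtain ⟨e1i, e1⟩ := h.excess_moment hp hpi hσ hS
  obtain ⟨e2i, e2⟩ := h.neg.excess_moment hp (by simpa using hpi) hσ (by simpa using hS)
  simp only [abs_neg] at e2
  set R₁ : Ω → ℝ := fun ω => ∑ k ∈ S, excess σ (X k ω) with hR₁
  set R₂ : Ω → ℝ := fun ω => ∑ k ∈ S, excess σ (- X k ω) with hR₂
  have hR₁0 : ∀ ω, 0 ≤ R₁ ω := fun ω => Finset.sum_nonneg fun k _ => excess_nonneg _ _
  have hR₂0 : ∀ ω, 0 ≤ R₂ ω := fun ω => Finset.sum_nonneg fun k _ => excess_nonneg _ _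
  have hsup0 : ∀ ω, 0 ≤ M.sup' hM fun m => |∑ k ∈ A m, X k ω| := fun ω => by
    obtain ⟨m, hm⟩ := hM
    exact (abs_nonneg _).trans (Finset.le_sup' (fun m => |∑ k ∈ A m, X k ω|) hm)
  have hpt : ∀ ω, (M.sup' hM fun m => |∑ k ∈ A m, X k ω|) ^ p ≤
      4 ^ p * (R₁ ω ^ p + R₂ ω ^ p + 2 * σ ^ p + σ ^ p * (Q ω / σ ^ r)) := by
    intro ω
    obtain ⟨m, hm, hmax⟩ := Finset.exists_mem_eq_sup' hM fun m => |∑ k ∈ A m, X k ω|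
    obtain ⟨T, hT0, hTr, hT⟩ := b.chain_pow hσ (fun k => X k ω) hA hV hr0 hm
    rw [hmax]
    refine (Real.rpow_le_rpow (abs_nonneg _) hT hp0).trans ?_
    refine (add_four_rpow_le hp0 (hR₁0 ω) (hR₂0 ω) hT0 hσ.le).trans ?_
    refine mul_le_mul_of_nonneg_left ?_ (by positivity)
    have h1 := rpow_le_of_pow hT0 hσ hp0 hpr
    have h2 : σ ^ p * (T ^ r / σ ^ r) ≤ σ ^ p * (Q ω / σ ^ r) :=
      mul_le_mul_of_nonneg_left (div_le_div_of_nonneg_right hTr (by positivity)) (by positivity)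
    linarith
  have i12 : Integrable (fun ω => R₁ ω ^ p + R₂ ω ^ p) μ := e1i.add e2i
  have i123 : Integrable (fun ω => R₁ ω ^ p + R₂ ω ^ p + 2 * σ ^ p) μ :=
    i12.add (integrable_const _)
  have i4 : Integrable (fun ω => σ ^ p * (Q ω / σ ^ r)) μ := (hQi.div_const _).const_mul _
  have iall : Integrable (fun ω => 4 ^ p * (R₁ ω ^ p + R₂ ω ^ p + 2 * σ ^ p +
      σ ^ p * (Q ω / σ ^ r))) μ := (i123.add i4).const_mul _
  refine (integral_mono_of_nonneg (Eventually.of_forall fun ω => Real.rpow_nonneg (hsup0 ω) p)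
    iall (Eventually.of_forall hpt)).trans ?_
  have h3 : ∫ _ω : Ω, 2 * σ ^ p ∂μ = 2 * σ ^ p := by simp
  rw [integral_const_mul, integral_add i123 i4, integral_add i12 (integrable_const _),
    integral_add e1i e2i, h3, integral_const_mul, integral_div]
  refine mul_le_mul_of_nonneg_left ?_ (by positivity)
  have h1 : (∫ ω, Q ω ∂μ) / σ ^ r ≤ 6 ^ r * (2 * (16 ^ d * c)) := by
    rw [div_le_iff₀ (by positivity)]
    linarith
  have h2 := mul_le_mul_of_nonneg_left h1 (Real.rpow_nonneg hσ.le p)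
  linarith



/-- **Rosenthal-type inequality for the maximum of partial sums** (Theorem 2.2).
For `p ≥ 2` and `d ≥ 1` there is a constant `C_{p,d}` such that for every negatively
associated field `{Y_k : k ≤ n}` with mean zero and finite `p`-th moments,
`E max_{m ≤ n} |Σ_{k ≤ m} Y_k|^p ≤ C_{p,d} { (Σ_{k ≤ n} E Y_k²)^{p/2} + Σ_{k ≤ n} E|Y_k|^p }`. -/
theorem na_field_max_moment_inequality
    (p : ℝ) (hp : 2 ≤ p) (d : ℕ) (hd : 1 ≤ d) :
    ∃ C : ℝ, ∀ (Ω : Type) (_ : MeasurableSpace Ω) (μ : Measure Ω),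
      IsProbabilityMeasure μ →
      ∀ (n : Fin d → ℕ) (Y : (Fin d → ℕ) → Ω → ℝ),
      (∀ k ∈ Finset.Icc (1 : Fin d → ℕ) n, Measurable (Y k)) →
      NegAssocOn μ Y (Set.Icc 1 n) →
      (∀ k ∈ Finset.Icc (1 : Fin d → ℕ) n, ∫ ω, Y k ω ∂μ = 0) →
      (∀ k ∈ Finset.Icc (1 : Fin d → ℕ) n, Integrable (fun ω => |Y k ω| ^ p) μ) →
      ∀ hn : ((Finset.Icc (1 : Fin d → ℕ) n).Nonempty),
      ∫ ω, ((Finset.Icc (1 : Fin d → ℕ) n).sup' hn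
          (fun m => |∑ k ∈ Finset.Icc (1 : Fin d → ℕ) m, Y k ω|)) ^ p ∂μ ≤
        C * ((∑ k ∈ Finset.Icc (1 : Fin d → ℕ) n, ∫ ω, (Y k ω) ^ 2 ∂μ) ^ (p / 2)
          + ∑ k ∈ Finset.Icc (1 : Fin d → ℕ) n, ∫ ω, |Y k ω| ^ p ∂μ) := by
  set r : ℕ := 4 * d + 1 + ⌈p⌉₊ with hr
  have hpr : p ≤ r := by
    rw [hr]; push_cast
    have := Nat.le_ceil p
    have : (0 : ℝ) ≤ d := Nat.cast_nonneg d
    linarith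
  set K : ℝ := 6 ^ r * (2 * (16 ^ d * (4 * ((r.factorial : ℝ) * Real.exp (80 * d))))) with hK
  have hK0 : 0 ≤ K := by positivity
  set a : ℝ := 2 ^ p with ha
  have ha0 : 0 ≤ a := by positivity
  set b : ℝ := a ^ (p - 1) with hb
  have hb0 : 0 ≤ b := by positivity
  refine ⟨4 ^ p * (2 * a + 2 * a * b + 2 + K), ?_⟩
  intro Ω _ μ _ n Y hmeas hna hmean hInt hn
  have h : CentredNA μ Y (Finset.Icc 1 n) :=
    { meas := hmeas
      na := by rw [Finset.coe_Icc]; exact hna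
      mean := hmean
      sq := fun k hk => by
        refine ((integrable_const (1 : ℝ)).add (hInt k hk)).mono'
          ((hmeas k hk).pow_const 2).aestronglyMeasurable (Eventually.of_forall fun ω => ?_)
        simp only [Real.norm_eq_abs, Pi.add_apply, abs_pow]
        have h0 := abs_nonneg (Y k ω)
        have h1 : 0 ≤ |Y k ω| ^ p := Real.rpow_nonneg h0 p
        rcases le_total |Y k ω| 1 with hy | hy
        · nlinarith
        · have h2 := Real.rpow_le_rpow_of_exponent_le hy hp
          rw [Real.rpow_two] at h2
          linarith }
  set s : ℝ := ∑ k ∈ Finset.Icc 1 n, ∫ ω, Y k ω ^ 2 ∂μ with hs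
  set G : ℝ := ∑ k ∈ Finset.Icc 1 n, ∫ ω, |Y k ω| ^ p ∂μ with hG
  have hs0 : 0 ≤ s := Finset.sum_nonneg fun k _ => integral_nonneg fun ω => sq_nonneg _
  have hG0 : 0 ≤ G := Finset.sum_nonneg fun k _ => integral_nonneg fun ω => by positivity
  -- The bracketing needs strict domination of the total variance, hence the perturbation `ε`.
  have key : ∀ ε : ℝ, 0 < ε →
      ∫ ω, ((Finset.Icc (1 : Fin d → ℕ) n).sup' hn
          (fun m => |∑ k ∈ Finset.Icc (1 : Fin d → ℕ) m, Y k ω|)) ^ p ∂μ ≤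
        4 ^ p * (2 * a + 2 * a * b + 2 + K) * ((s + ε) ^ (p / 2) + G) := by
    intro ε hε
    have hpos : 0 < s + ε := by linarith
    set σ : ℝ := Real.sqrt (s + ε) with hσdef
    have hσ : 0 < σ := Real.sqrt_pos.2 hpos
    have hσ2 : σ ^ 2 = s + ε := Real.sq_sqrt hpos.le
    have hσp : σ ^ p = (s + ε) ^ (p / 2) := by
      rw [hσdef, Real.sqrt_eq_rpow, ← Real.rpow_mul hpos.le]
      congr 1; ring
    obtain ⟨br⟩ := exists_bracketing hd n (fun k => ∫ ω, Y k ω ^ 2 ∂μ)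
      (fun k _ => integral_nonneg fun ω => sq_nonneg _) (s := σ ^ 2) (by rw [hσ2]; linarith)
    have hmax := br.max_moment h hσ
      (fun m hm => Finset.Icc_subset_Icc_right (Finset.mem_Icc.1 hm).2) hn
      (by linarith : 1 < p) hInt (by rw [hσ2]; linarith) (r := r) (by omega) hpr
    refine hmax.trans ?_
    rw [← hσp, mul_assoc]
    refine mul_le_mul_of_nonneg_left ?_ (by positivity)
    have hσp0 : 0 ≤ σ ^ p := by positivity
    have hab : 0 ≤ a * b := mul_nonneg ha0 hb0
    nlinarith [mul_nonneg ha0 hσp0, mul_nonneg hab hG0, mul_nonneg hK0 hG0]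
  have hcont : Continuous fun ε : ℝ =>
      4 ^ p * (2 * a + 2 * a * b + 2 + K) * ((s + ε) ^ (p / 2) + G) :=
    continuous_const.mul (((continuous_const.add continuous_id).rpow_const
      fun _ => Or.inr (by linarith)).add continuous_const)
  have hlim := (hcont.tendsto 0).mono_left (nhdsWithin_le_nhds (s := Set.Ioi 0))
  rw [add_zero] at hlim
  exact ge_of_tendsto hlim (eventually_mem_nhdsWithin.mono key)
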